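/- arXiv:2507.20708 — 2 statements merged into one kernel-verified Lean document; each statement's English description precedes it below -/
import Mathlib

section
/- Let λ₀, λ₁, n₀, n₁, Δ be strictly positive real numbers, set δ₁ = λ₁ / (1 + (1/Δ)·(1 + (n₁·λ₀)/(n₀·λ₁))) and δ₀ = (n₀/n₁)·δ₁. Then 0 < δ₁ < λ₁ and ((λ₀ + δ₀)/n₀)·(n₁/(λ₁ − δ₁)) = (λ₀/n₀)·(n₁/λ₁) + Δ. That is, in the proportional case δ₀/n₀ = δ₁/n₁, adding δ₀ to the numerator count and subtracting δ₁ from the denominator count raises the Disparate Impact by exactly Δ. -/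
/-!
Transferring one and the same rate `δ₀ / n₀ = δ₁ / n₁` between the groups preserves the sum of the
two positive rates. Since `DI + 1` is that sum divided by the rate of group `1`, the transfer
divides `DI + 1` by `1 - δ₁ / λ₁`. It therefore raises `DI` by `Δ` exactly when
`1 - δ₁ / λ₁ = (DI + 1) / (DI + 1 + Δ)`, which gives the prescribed `δ₁`.
-/

section Field

variable {K : Type*} [Field K]

/-- The Disparate Impact of groups of sizes `n₀`, `n₁` with `l₀`, `l₁` positive predictions: the
ratio of their rates of positive predictions. It takes the value `0` when the rate of group `1`
vanishes. -/
def disparateImpact (n₀ n₁ l₀ l₁ : K) : K :=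
  (l₀ / n₀) / (l₁ / n₁)

/-- The fraction `δ₁ / λ₁` of the positive predictions of group `1` which a proportional
manipulation withdraws in order to raise a Disparate Impact `r` by `Δ`. For `Δ ≠ 0` it equals
`Δ / (r + 1 + Δ)`; the nested form is the one in which `δ₁` is prescribed. -/
def withdrawnFraction (r Δ : K) : K :=
  1 / (1 + 1 / Δ * (1 + r))

theorem disparateImpact_eq_mul (n₀ n₁ l₀ l₁ : K) :
    disparateImpact n₀ n₁ l₀ l₁ = l₀ / n₀ * (n₁ / l₁) := by
  rw [disparateImpact, div_eq_mul_inv, inv_div]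

theorem disparateImpact_eq_div (n₀ n₁ l₀ l₁ : K) :
    disparateImpact n₀ n₁ l₀ l₁ = n₁ * l₀ / (n₀ * l₁) := by
  rw [disparateImpact, div_div_div_eq, mul_comm l₀]

theorem disparateImpact_add_one {n₁ l₁ : K} (hn₁ : n₁ ≠ 0) (hl₁ : l₁ ≠ 0) (n₀ l₀ : K) :
    disparateImpact n₀ n₁ l₀ l₁ + 1 = (l₀ / n₀ + l₁ / n₁) / (l₁ / n₁) :=
  div_add_one (div_ne_zero hl₁ hn₁)

theorem disparateImpact_add_sub_add_one {n₀ n₁ l₁ δ₀ δ₁ : K} (hn₁ : n₁ ≠ 0) (hl₁ : l₁ ≠ 0)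
    (hδ₁ : l₁ - δ₁ ≠ 0) (hδ : δ₀ / n₀ = δ₁ / n₁) (l₀ : K) :
    disparateImpact n₀ n₁ (l₀ + δ₀) (l₁ - δ₁) + 1 =
      (disparateImpact n₀ n₁ l₀ l₁ + 1) / (1 - δ₁ / l₁) := by
  have rate_sum : (l₀ + δ₀) / n₀ + (l₁ - δ₁) / n₁ = l₀ / n₀ + l₁ / n₁ := by
    rw [add_div, sub_div, hδ, add_add_sub_cancel]
  have rate_one : (l₁ - δ₁) / n₁ = l₁ / n₁ * (1 - δ₁ / l₁) := by
    field_simp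
  rw [disparateImpact_add_one hn₁ hδ₁, disparateImpact_add_one hn₁ hl₁, rate_sum, rate_one,
    div_div]

theorem one_sub_withdrawnFraction {r Δ : K} (hΔ : Δ ≠ 0) (hr : r + 1 + Δ ≠ 0) :
    1 - withdrawnFraction r Δ = (r + 1) / (r + 1 + Δ) := by
  have denominator : 1 + 1 / Δ * (1 + r) = (r + 1 + Δ) / Δ := by
    field_simp
    ring
  rw [withdrawnFraction, denominator, one_div_div, one_sub_div hr, add_sub_cancel_right]

theorem disparateImpact_add_sub_eq_add {n₀ n₁ l₀ l₁ δ₀ δ₁ Δ : K} (hn₁ : n₁ ≠ 0) (hl₁ : l₁ ≠ 0)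
    (hΔ : Δ ≠ 0) (hDI : disparateImpact n₀ n₁ l₀ l₁ + 1 ≠ 0)
    (hDIΔ : disparateImpact n₀ n₁ l₀ l₁ + 1 + Δ ≠ 0) (hδ : δ₀ / n₀ = δ₁ / n₁)
    (hδ₁ : δ₁ = l₁ * withdrawnFraction (disparateImpact n₀ n₁ l₀ l₁) Δ) :
    disparateImpact n₀ n₁ (l₀ + δ₀) (l₁ - δ₁) = disparateImpact n₀ n₁ l₀ l₁ + Δ := by
  set r := disparateImpact n₀ n₁ l₀ l₁
  have remaining : 1 - δ₁ / l₁ = (r + 1) / (r + 1 + Δ) := by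
    rw [hδ₁, mul_div_cancel_left₀ _ hl₁, one_sub_withdrawnFraction hΔ hDIΔ]
  have remaining_ne_zero : l₁ - δ₁ ≠ 0 := by
    have : l₁ - δ₁ = l₁ * (1 - δ₁ / l₁) := by field_simp
    rw [this, remaining]
    exact mul_ne_zero hl₁ (div_ne_zero hDI hDIΔ)
  apply add_right_cancel (b := 1)
  calc
    disparateImpact n₀ n₁ (l₀ + δ₀) (l₁ - δ₁) + 1 = (r + 1) / (1 - δ₁ / l₁) :=
      disparateImpact_add_sub_add_one hn₁ hl₁ remaining_ne_zero hδ l₀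
    _ = r + 1 + Δ := by rw [remaining, div_div_cancel₀ hDI]
    _ = r + Δ + 1 := add_right_comm r 1 Δ

end Field

section LinearOrderedField

variable {K : Type*} [Field K] [LinearOrder K] [IsStrictOrderedRing K]

theorem disparateImpact_nonneg {n₀ n₁ l₀ l₁ : K} (hn₀ : 0 ≤ n₀) (hn₁ : 0 ≤ n₁) (hl₀ : 0 ≤ l₀)
    (hl₁ : 0 ≤ l₁) : 0 ≤ disparateImpact n₀ n₁ l₀ l₁ :=
  div_nonneg (div_nonneg hl₀ hn₀) (div_nonneg hl₁ hn₁)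

theorem withdrawnFraction_mem_Ioo {r Δ : K} (hr : -1 < r) (hΔ : 0 < Δ) :
    withdrawnFraction r Δ ∈ Set.Ioo 0 1 := by
  have one_lt : 1 < 1 + 1 / Δ * (1 + r) :=
    lt_add_of_pos_right 1 (mul_pos (one_div_pos.2 hΔ) (neg_lt_iff_pos_add'.1 hr))
  exact ⟨one_div_pos.2 (one_pos.trans one_lt), (div_lt_one (one_pos.trans one_lt)).2 one_lt⟩

theorem proportional_fairwashing_general {lam0 lam1 n0 n1 Δ δ0 δ1 : K}
    (hlam0 : 0 ≤ lam0) (hlam1 : 0 < lam1) (hn0 : 0 < n0) (hn1 : 0 < n1) (hΔ : 0 < Δ)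
    (hδ1 : δ1 = lam1 / (1 + (1 / Δ) * (1 + (n1 * lam0) / (n0 * lam1))))
    (hδ0 : δ0 = (n0 / n1) * δ1) :
    0 < δ1 ∧ δ1 < lam1 ∧
      ((lam0 + δ0) / n0) * (n1 / (lam1 - δ1)) = (lam0 / n0) * (n1 / lam1) + Δ := by
  have hDI : 0 ≤ disparateImpact n0 n1 lam0 lam1 :=
    disparateImpact_nonneg hn0.le hn1.le hlam0 hlam1.le
  have withdrawn : δ1 = lam1 * withdrawnFraction (disparateImpact n0 n1 lam0 lam1) Δ := by
    rw [hδ1, ← disparateImpact_eq_div, withdrawnFraction, mul_one_div]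
  have proportional : δ0 / n0 = δ1 / n1 := by
    rw [hδ0]
    field_simp
  obtain ⟨fraction_pos, fraction_lt_one⟩ :=
    withdrawnFraction_mem_Ioo (neg_one_lt_zero.trans_le hDI) hΔ
  refine ⟨withdrawn ▸ mul_pos hlam1 fraction_pos,
    withdrawn ▸ mul_lt_of_lt_one_right hlam1 fraction_lt_one, ?_⟩
  rw [← disparateImpact_eq_mul, ← disparateImpact_eq_mul]
  exact disparateImpact_add_sub_eq_add hn1.ne' hlam1.ne' hΔ.ne' (by positivity) (by positivity)
    proportional withdrawn

end LinearOrderedField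

/-- proportional case: for strictly positive reals `λ₀ λ₁ n₀ n₁ Δ`, with
`δ₁ = λ₁ / (1 + (1/Δ)·(1 + (n₁·λ₀)/(n₀·λ₁)))` and `δ₀ = (n₀/n₁)·δ₁`, one has
`0 < δ₁ < λ₁` and the Disparate Impact increases by exactly `Δ`. -/
theorem proportional_fairwashing (lam0 lam1 n0 n1 Δ δ0 δ1 : ℝ)
    (hlam0 : 0 < lam0) (hlam1 : 0 < lam1) (hn0 : 0 < n0) (hn1 : 0 < n1) (hΔ : 0 < Δ)
    (hδ1 : δ1 = lam1 / (1 + (1 / Δ) * (1 + (n1 * lam0) / (n0 * lam1))))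
    (hδ0 : δ0 = (n0 / n1) * δ1) :
    0 < δ1 ∧ δ1 < lam1 ∧
      ((lam0 + δ0) / n0) * (n1 / (lam1 - δ1)) = (lam0 / n0) * (n1 / lam1) + Δ :=
  proportional_fairwashing_general hlam0.le hlam1 hn0 hn1 hΔ hδ1 hδ0
end

section
/- Let n ≥ 1, k ≥ 1, φ₁,…,φₙ ∈ ℝ^k and t ∈ ℝ^k. If the empirical covariance matrix C = (1/n)Σᵢφᵢφᵢᵀ − φ̄φ̄ᵀ (with φ̄ = (1/n)Σᵢφᵢ) is invertible, then the function H(ξ) = log Z(ξ) − ⟨ξ,t⟩ is strictly convex on ℝ^k. -/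
/-!
Let `p ≥ 0` and `Z(u) = ∑ a, p a * exp (u a)`. By strict convexity of `exp`, if `α, β > 0` and
`α + β = 1`, then `Z(α u + β w) < α Z(u) + β Z(w)` as soon as `u` and `w` differ on the support of
`p`. Subtracting the constants `log Z(u)` from `u` and `log Z(w)` from `w` makes both sums on the
right equal to `1`, which turns this into strict convexity of `log Z` along every segment whose
direction is not constant on the support of `p`. A direction `v` with `φ v` constant there is one in
which the features have variance zero, so it lies in the kernel of their covariance matrix.
-/

section

open Matrix

variable {ι κ E : Type*} [Fintype ι] {p u w : ι → ℝ} {α β : ℝ}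

/-- The partition function of the exponential family with base weights `p`, as a function of the
exponents `u`. The function `Z(ξ)` of the family with feature vectors `φ a` is
`partitionFunction p (φ *ᵥ ξ)`, where the `φ a` are the rows of the matrix `φ`. -/
noncomputable def partitionFunction (p u : ι → ℝ) : ℝ :=
  ∑ a, p a * Real.exp (u a)

/-- The covariance matrix of the rows of `φ`, the row `φ a` having probability `p a`. -/
def covarianceMatrix (p : ι → ℝ) (φ : Matrix ι κ ℝ) : Matrix κ κ ℝ :=
  Matrix.of fun i j =>
    ∑ a, p a * (φ a i * φ a j) - (∑ a, p a * φ a i) * ∑ a, p a * φ a j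

theorem partitionFunction_pos (hp : 0 < p) (u : ι → ℝ) : 0 < partitionFunction p u := by
  obtain ⟨hp₀, a, ha⟩ := Pi.lt_def.1 hp
  exact Finset.sum_pos' (fun b _ => mul_nonneg (hp₀ b) (Real.exp_nonneg _))
    ⟨a, Finset.mem_univ a, mul_pos ha (Real.exp_pos _)⟩

theorem partitionFunction_sub_const (p u : ι → ℝ) (c : ℝ) :
    partitionFunction p (fun a => u a - c) = partitionFunction p u / Real.exp c := by
  simp only [partitionFunction, Real.exp_sub, Finset.sum_div, mul_div_assoc]

theorem partitionFunction_sub_log (hp : 0 < p) (u : ι → ℝ) :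
    partitionFunction p (fun a => u a - Real.log (partitionFunction p u)) = 1 := by
  have hZ := partitionFunction_pos hp u
  rw [partitionFunction_sub_const, Real.exp_log hZ, div_self hZ.ne']

theorem partitionFunction_lt (hp : 0 ≤ p) (hα : 0 < α) (hβ : 0 < β) (hαβ : α + β = 1)
    (huw : ∃ a, 0 < p a ∧ u a ≠ w a) :
    partitionFunction p (α • u + β • w) <
      α * partitionFunction p u + β * partitionFunction p w := by
  obtain ⟨a, ha, hne⟩ := huw
  have hexp : ∀ b, Real.exp (α * u b + β * w b) ≤ α * Real.exp (u b) + β * Real.exp (w b) :=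
    fun b => convexOn_exp.2 trivial trivial hα.le hβ.le hαβ
  have hexp_lt : Real.exp (α * u a + β * w a) < α * Real.exp (u a) + β * Real.exp (w a) :=
    strictConvexOn_exp.2 trivial trivial hne hα hβ hαβ
  calc partitionFunction p (α • u + β • w)
      < ∑ b, p b * (α * Real.exp (u b) + β * Real.exp (w b)) :=
        Finset.sum_lt_sum (fun b _ => mul_le_mul_of_nonneg_left (hexp b) (hp b))
          ⟨a, Finset.mem_univ a, mul_lt_mul_of_pos_left hexp_lt ha⟩
    _ = α * partitionFunction p u + β * partitionFunction p w := by
        simp only [partitionFunction, mul_add, Finset.sum_add_distrib, Finset.mul_sum,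
          mul_left_comm]

theorem log_partitionFunction_lt (hp : 0 ≤ p) (hα : 0 < α) (hβ : 0 < β) (hαβ : α + β = 1)
    (huw : ∃ a b, 0 < p a ∧ 0 < p b ∧ u a - w a ≠ u b - w b) :
    Real.log (partitionFunction p (α • u + β • w)) <
      α * Real.log (partitionFunction p u) + β * Real.log (partitionFunction p w) := by
  obtain ⟨a, b, ha, hb, hab⟩ := huw
  have hp_pos : 0 < p := Pi.lt_def.2 ⟨hp, a, ha⟩
  set A := Real.log (partitionFunction p u) with hA
  set B := Real.log (partitionFunction p w) with hB
  have hne : ∃ c, 0 < p c ∧ u c - A ≠ w c - B := by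
    by_contra! h
    exact hab (by linarith [h a ha, h b hb])
  have hshift : α • (fun c => u c - A) + β • (fun c => w c - B) =
      fun c => (α • u + β • w) c - (α * A + β * B) := by
    ext c
    simp only [Pi.add_apply, Pi.smul_apply, smul_eq_mul]
    ring
  have hlt := partitionFunction_lt hp hα hβ hαβ hne
  rw [hshift, partitionFunction_sub_const, hA, hB, partitionFunction_sub_log hp_pos,
    partitionFunction_sub_log hp_pos, mul_one, mul_one, hαβ, div_lt_one (Real.exp_pos _)] at hlt
  exact (Real.log_lt_iff_lt_exp (partitionFunction_pos hp_pos _)).2 hlt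

theorem strictConvexOn_log_partitionFunction [AddCommGroup E] [Module ℝ E] (hp : 0 ≤ p)
    (L : E →ₗ[ℝ] ι → ℝ) (hL : ∀ v, (∀ a b, 0 < p a → 0 < p b → L v a = L v b) → v = 0) :
    StrictConvexOn ℝ Set.univ fun ξ => Real.log (partitionFunction p (L ξ)) := by
  refine ⟨convex_univ, fun x _ y _ hxy α β hα hβ hαβ => ?_⟩
  have hne : ∃ a b, 0 < p a ∧ 0 < p b ∧ L x a - L y a ≠ L x b - L y b := by
    by_contra! h
    exact hxy (sub_eq_zero.1 (hL _ fun a b ha hb => by simpa using h a b ha hb))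
  simpa only [map_add, map_smul, smul_eq_mul] using log_partitionFunction_lt hp hα hβ hαβ hne

variable [Fintype κ]

theorem covarianceMatrix_mulVec (p : ι → ℝ) (φ : Matrix ι κ ℝ) (v : κ → ℝ) :
    covarianceMatrix p φ *ᵥ v = (p * φ *ᵥ v - (p ⬝ᵥ φ *ᵥ v) • p) ᵥ* φ := by
  have hcov : covarianceMatrix p φ =
      φᵀ * Matrix.of (fun a => p a • φ a) - vecMulVec (p ᵥ* φ) (p ᵥ* φ) := by
    ext i j
    simp only [covarianceMatrix, of_apply, Matrix.sub_apply, mul_apply, transpose_apply,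
      Pi.smul_apply, smul_eq_mul, vecMulVec_apply, vecMul, dotProduct, mul_left_comm]
  have hweighted : Matrix.of (fun a => p a • φ a) *ᵥ v = p * φ *ᵥ v := by
    ext a
    exact smul_dotProduct (p a) (φ a) v
  rw [hcov, sub_mulVec, ← mulVec_mulVec, hweighted, mulVec_transpose, vecMulVec_mulVec,
    ← dotProduct_mulVec, op_smul_eq_smul, sub_vecMul, smul_vecMul]

theorem covarianceMatrix_mulVec_eq_zero (hp : p ∈ stdSimplex ℝ ι) {φ : Matrix ι κ ℝ} {v : κ → ℝ}
    (hv : ∀ a b, 0 < p a → 0 < p b → (φ *ᵥ v) a = (φ *ᵥ v) b) :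
    covarianceMatrix p φ *ᵥ v = 0 := by
  have hmean : ∀ a, p a * (φ *ᵥ v) a = p a * (p ⬝ᵥ φ *ᵥ v) := by
    intro a
    obtain ha | ha := (hp.1 a).eq_or_lt
    · simp [← ha]
    have hterm : ∀ b, p b * (φ *ᵥ v) b = p b * (φ *ᵥ v) a := by
      intro b
      obtain hb | hb := (hp.1 b).eq_or_lt
      · simp [← hb]
      · rw [hv b a hb ha]
    simp only [dotProduct, hterm, ← Finset.sum_mul, hp.2, one_mul]
  have hzero : p * φ *ᵥ v - (p ⬝ᵥ φ *ᵥ v) • p = 0 := by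
    ext a
    simp [hmean, mul_comm]
  rw [covarianceMatrix_mulVec, hzero, zero_vecMul]

theorem H_strictConvex_general [DecidableEq κ] (hp : p ∈ stdSimplex ℝ ι) (φ : Matrix ι κ ℝ)
    (t : κ → ℝ) (hC : IsUnit (covarianceMatrix p φ)) :
    StrictConvexOn ℝ Set.univ fun ξ =>
      Real.log (partitionFunction p (φ *ᵥ ξ)) - ξ ⬝ᵥ t := by
  have hker : ∀ v, (∀ a b, 0 < p a → 0 < p b → (φ *ᵥ v) a = (φ *ᵥ v) b) → v = 0 := fun v hv =>
    mulVec_injective_of_isUnit hC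
      ((covarianceMatrix_mulVec_eq_zero hp hv).trans (mulVec_zero _).symm)
  have hlinear : ConcaveOn ℝ Set.univ fun ξ => ξ ⬝ᵥ t :=
    ((dotProductBilin ℝ ℝ).flip t).concaveOn convex_univ
  exact (strictConvexOn_log_partitionFunction hp.1 φ.mulVecLin hker).sub_concaveOn hlinear

end

/-- if the empirical covariance matrix of `φ₁,…,φₙ ∈ ℝ^k` is invertible,
then `H(ξ) = log Z(ξ) − ⟨ξ,t⟩` is strictly convex on `ℝ^k`, where
`Z(ξ) = (1/n)Σᵢ exp⟨φᵢ,ξ⟩`. -/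
theorem H_strictConvex (n k : ℕ) (hn : 1 ≤ n) (hk : 1 ≤ k)
    (φ : Fin n → Fin k → ℝ) (t : Fin k → ℝ)
    (hC : IsUnit (Matrix.of (fun i j : Fin k =>
      (1 / n : ℝ) * ∑ a, φ a i * φ a j -
        ((1 / n : ℝ) * ∑ a, φ a i) * ((1 / n : ℝ) * ∑ a, φ a j)))) :
    StrictConvexOn ℝ Set.univ (fun ξ : Fin k → ℝ =>
      Real.log ((1 / n : ℝ) * ∑ a, Real.exp (∑ j, φ a j * ξ j)) - ∑ j, ξ j * t j) := by
  have : NeZero n := ⟨Nat.one_le_iff_ne_zero.1 hn⟩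
  simpa only [partitionFunction, stdSimplex.barycenter_apply, Fintype.card_fin, ← one_div,
    ← Finset.mul_sum, Matrix.mulVec, dotProduct] using
    H_strictConvex_general (stdSimplex.barycenter (𝕜 := ℝ) (X := Fin n)).2 φ t
      (by simpa only [covarianceMatrix, stdSimplex.barycenter_apply, Fintype.card_fin, ← one_div,
        ← Finset.mul_sum] using hC)
end
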